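/- For a real number r and positive reals a, b, let M_r(a, b; 2/3) denote the weighted power mean with weights 2/3 and 1/3: M_r(a, b; 2/3) = ((2/3)·a^r + (1/3)·b^r)^(1/r) if r ≠ 0, and M_0(a, b; 2/3) = a^(2/3)·b^(1/3). Then for real numbers α, β, the double inequality M_α(1, cos x; 2/3) < sin(x)/x < M_β(1, cos x; 2/3) holds for every x ∈ (0, π/2) if and only if α ≤ 4/5 and β ≥ (ln 3 − ln 2)/(ln π − ln 2). -/

import Mathlib

open Real Set

/-- The weighted power mean of `a` and `b` with weights `2/3` and `1/3`. -/
noncomputable def weightedPowerMean (r a b : ℝ) : ℝ :=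
  if r = 0 then a ^ ((2 : ℝ) / 3) * b ^ ((1 : ℝ) / 3)
  else (2 / 3 * a ^ r + 1 / 3 * b ^ r) ^ (1 / r)

/-!
Fix `r > 0` and let `F` be the logarithm of the quotient of `sin x / x` by the power mean of order
`r`. With `A = sin x - x cos x` and `B = x - sin x cos x`, the derivative of `F` has the sign of
`G = log (B / (2 A)) - (1 - r) log (cos x)`, and `G' = tan x * ((1 - r) - h)`, where `h` is the
ratio of the logarithmic derivatives of `B / (2 A)` and `cos`. Both `F` and `G` vanish at `0+`.

The function `h` is strictly decreasing: this amounts to `A(x)² A(2 x) < B(x)³`, which follows from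
Taylor bounds; and `h` tends to `1 / 5` at `0+`. So `r ≤ 4 / 5` makes `G`, hence `F`, positive,
while for `r > 4 / 5` both are negative near `0`.

For the upper bound, `(1 - r) - h` increases, so it changes sign at most once, from negative to
positive. This property passes to `G` and then to `F`, so that `F` is negative on `(0, π / 2)` as
soon as `F (π / 2) = log (3 / 2) / r - log (π / 2)` is at most `0`. Monotonicity of power means in
the order reduces all other orders to the positive ones.
-/

open Filter Topology

section OneSidedMonotonicity

lemma lt_of_strictMonoOn_of_tendsto {α β : Type*} [LinearOrder α] [TopologicalSpace α]
    [OrderTopology α] [DenselyOrdered α] [Preorder β] [TopologicalSpace β] [ClosedIicTopology β]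
    {f : α → β} {a b : α} {l : β} (hab : a < b) (hf : StrictMonoOn f (Ioc a b))
    (hl : Tendsto f (𝓝[>] a) (𝓝 l)) : l < f b := by
  obtain ⟨m, ham, hmb⟩ := exists_between hab
  have : (𝓝[>] a).NeBot := nhdsGT_neBot_of_exists_gt ⟨b, hab⟩
  have hlm : l ≤ f m := le_of_tendsto hl <| by
    filter_upwards [Ioo_mem_nhdsGT ham] with x hx
    exact (hf ⟨hx.1, (hx.2.trans hmb).le⟩ ⟨ham, hmb.le⟩ hx.2).le
  exact hlm.trans_lt (hf ⟨ham, hmb.le⟩ ⟨hab, le_rfl⟩ hmb)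

variable {f f' : ℝ → ℝ} {a b l : ℝ}

lemma lt_of_tendsto_of_hasDerivAt_pos (hab : a < b) (hl : Tendsto f (𝓝[>] a) (𝓝 l))
    (hc : ContinuousOn f (Ioc a b)) (hf : ∀ x ∈ Ioo a b, HasDerivAt f (f' x) x)
    (hpos : ∀ x ∈ Ioo a b, 0 < f' x) : l < f b := by
  refine lt_of_strictMonoOn_of_tendsto hab ?_ hl
  refine strictMonoOn_of_hasDerivWithinAt_pos (f' := f') (convex_Ioc a b) hc ?_ ?_ <;>
    rw [interior_Ioc]
  exacts [fun x hx ↦ (hf x hx).hasDerivWithinAt, hpos]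

lemma lt_of_tendsto_of_hasDerivAt_neg (hab : a < b) (hl : Tendsto f (𝓝[>] a) (𝓝 l))
    (hc : ContinuousOn f (Ioc a b)) (hf : ∀ x ∈ Ioo a b, HasDerivAt f (f' x) x)
    (hneg : ∀ x ∈ Ioo a b, f' x < 0) : f b < l :=
  neg_lt_neg_iff.1 <| lt_of_tendsto_of_hasDerivAt_pos (f := -f) hab hl.neg hc.neg
    (fun x hx ↦ (hf x hx).neg) fun x hx ↦ neg_pos.2 (hneg x hx)

lemma nonneg_of_hasDerivAt_nonneg (ha : 0 ≤ f a) (hf : ∀ x, HasDerivAt f (f' x) x)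
    (hf' : ∀ x, a ≤ x → 0 ≤ f' x) {x : ℝ} (hx : a ≤ x) : 0 ≤ f x := by
  have hmono : MonotoneOn f (Ici a) :=
    monotoneOn_of_hasDerivWithinAt_nonneg (convex_Ici a)
      (fun y _ ↦ (hf y).continuousAt.continuousWithinAt) (fun y _ ↦ (hf y).hasDerivWithinAt)
      fun y hy ↦ hf' y (interior_subset hy)
  exact ha.trans (hmono self_mem_Ici hx hx)

end OneSidedMonotonicity

section SingleCrossing

/-- The single crossing property: once `f` is nonnegative it is positive from then on, so that on
`s` it changes sign at most once, from negative to positive. -/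
def SingleCrossingOn (f : ℝ → ℝ) (s : Set ℝ) : Prop :=
  ∀ ⦃x⦄, x ∈ s → ∀ ⦃y⦄, y ∈ s → x < y → 0 ≤ f x → 0 < f y

variable {f f' g : ℝ → ℝ} {s t : Set ℝ} {a b : ℝ}

lemma singleCrossingOn_of_strictMonoOn (hf : StrictMonoOn f s) : SingleCrossingOn f s :=
  fun _ hx _ hy hxy h ↦ h.trans_lt (hf hx hy hxy)

lemma SingleCrossingOn.mono (hf : SingleCrossingOn f s) (hts : t ⊆ s) : SingleCrossingOn f t :=
  fun _ hx _ hy ↦ hf (hts hx) (hts hy)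

lemma SingleCrossingOn.pos_mul (hf : SingleCrossingOn f s) (hg : ∀ x ∈ s, 0 < g x) :
    SingleCrossingOn (fun x ↦ g x * f x) s := fun x hx y hy hxy h ↦
  mul_pos (hg y hy) (hf hx hy hxy ((mul_nonneg_iff_of_pos_left (hg x hx)).1 h))

lemma SingleCrossingOn.exp_sub_one (hf : SingleCrossingOn f s) :
    SingleCrossingOn (fun x ↦ exp (f x) - 1) s := fun _ hx _ hy hxy h ↦
  sub_pos.2 <| one_lt_exp_iff.2 <| hf hx hy hxy <| one_le_exp_iff.1 <| sub_nonneg.1 h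

lemma SingleCrossingOn.of_hasDerivAt (hl : Tendsto f (𝓝[>] a) (𝓝 0))
    (hc : ContinuousOn f (Ioc a b)) (hf : ∀ x ∈ Ioo a b, HasDerivAt f (f' x) x)
    (hf' : SingleCrossingOn f' (Ioo a b)) : SingleCrossingOn f (Ioc a b) := by
  intro x hx y hy hxy hfx
  have hxb : x < b := hxy.trans_le hy.2
  obtain ⟨c, hc', hfc⟩ : ∃ c ∈ Ioo a x, 0 ≤ f' c := by
    by_contra! hneg
    exact hfx.not_gt <| lt_of_tendsto_of_hasDerivAt_neg hx.1 hl
      (hc.mono (Ioc_subset_Ioc_right hx.2)) (fun z hz ↦ hf z ⟨hz.1, hz.2.trans hxb⟩) hneg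
  have hpos : ∀ z ∈ Ioo x y, 0 < f' z := fun z hz ↦
    hf' ⟨hc'.1, hc'.2.trans hxb⟩ ⟨hx.1.trans hz.1, hz.2.trans_le hy.2⟩ (hc'.2.trans hz.1) hfc
  refine hfx.trans_lt <| lt_of_tendsto_of_hasDerivAt_pos hxy ?_
    (hc.mono (Ioc_subset_Ioc hx.1.le hy.2))
    (fun z hz ↦ hf z ⟨hx.1.trans hz.1, hz.2.trans_le hy.2⟩) hpos
  exact (hf x ⟨hx.1, hxb⟩).continuousAt.tendsto.mono_left nhdsWithin_le_nhds

end SingleCrossing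

lemma tendsto_div_pow_succ_of_hasDerivAt {f f' : ℝ → ℝ} {n : ℕ} {c : ℝ} (h0 : f 0 = 0)
    (hf : ∀ x, HasDerivAt f (f' x) x) (h : Tendsto (fun x ↦ f' x / x ^ n) (𝓝[≠] 0) (𝓝 c)) :
    Tendsto (fun x ↦ f x / x ^ (n + 1)) (𝓝[≠] 0) (𝓝 (c / (n + 1))) := by
  have hn : ((n : ℝ) + 1) ≠ 0 := by positivity
  refine HasDerivAt.lhopital_zero_nhdsNE (f' := f') (g' := fun x ↦ (n + 1) * x ^ n)
    (.of_forall hf) (.of_forall fun x ↦ by simpa using hasDerivAt_pow (n + 1) x) ?_ ?_ ?_ ?_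
  · filter_upwards [self_mem_nhdsWithin] with x hx
    exact mul_ne_zero hn (pow_ne_zero n hx)
  · simpa [h0] using (hf 0).continuousAt.tendsto.mono_left nhdsWithin_le_nhds
  · simpa using ((continuous_pow (M := ℝ) (n + 1)).tendsto 0).mono_left nhdsWithin_le_nhds
  · refine (h.div_const ((n : ℝ) + 1)).congr fun x ↦ ?_
    rw [div_div, mul_comm]

section Taylor

/-- The Taylor polynomial of `cos` at `0` made of its first `n` nonzero terms. -/
noncomputable def cosTaylor (n : ℕ) (x : ℝ) : ℝ :=
  ∑ k ∈ Finset.range n, (-1) ^ k * (x ^ (2 * k) / (2 * k).factorial)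

/-- The Taylor polynomial of `sin` at `0` made of its first `n` nonzero terms. -/
noncomputable def sinTaylor (n : ℕ) (x : ℝ) : ℝ :=
  ∑ k ∈ Finset.range n, (-1) ^ k * (x ^ (2 * k + 1) / (2 * k + 1).factorial)

lemma sinTaylor_three (x : ℝ) : sinTaylor 3 x = x - x ^ 3 / 6 + x ^ 5 / 120 := by
  norm_num [sinTaylor, Finset.sum_range_succ, Nat.factorial]
  ring

lemma sinTaylor_five (x : ℝ) :
    sinTaylor 5 x = x - x ^ 3 / 6 + x ^ 5 / 120 - x ^ 7 / 5040 + x ^ 9 / 362880 := by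
  norm_num [sinTaylor, Finset.sum_range_succ, Nat.factorial]
  ring

lemma hasDerivAt_pow_div_factorial (n : ℕ) (x : ℝ) :
    HasDerivAt (fun y : ℝ ↦ y ^ (n + 1) / (n + 1).factorial) (x ^ n / n.factorial) x := by
  refine ((hasDerivAt_pow (n + 1) x).div_const _).congr_deriv ?_
  rw [Nat.factorial_succ]
  push_cast
  have : (n.factorial : ℝ) ≠ 0 := by positivity
  field_simp

lemma hasDerivAt_sinTaylor (n : ℕ) (x : ℝ) : HasDerivAt (sinTaylor n) (cosTaylor n x) x :=
  HasDerivAt.fun_sum fun k _ ↦ (hasDerivAt_pow_div_factorial (2 * k) x).const_mul _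

lemma hasDerivAt_cosTaylor_succ (n : ℕ) (x : ℝ) :
    HasDerivAt (cosTaylor (n + 1)) (-sinTaylor n x) x := by
  have hsplit : cosTaylor (n + 1) = fun y ↦ ∑ k ∈ Finset.range n,
      (-1 : ℝ) ^ (k + 1) * (y ^ (2 * k + 1 + 1) / (2 * k + 1 + 1).factorial) + 1 := by
    funext y
    simp [cosTaylor, Finset.sum_range_succ', mul_add]
  rw [hsplit, sinTaylor, ← Finset.sum_neg_distrib]
  refine HasDerivAt.add_const 1 (HasDerivAt.fun_sum fun k _ ↦ ?_)
  refine ((hasDerivAt_pow_div_factorial (2 * k + 1) x).const_mul _).congr_deriv ?_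
  ring

lemma neg_one_pow_mul_sub_taylor_nonneg (n : ℕ) : ∀ x, 0 ≤ x →
    0 ≤ (-1) ^ (n + 1) * (cos x - cosTaylor (n + 1) x) ∧
      0 ≤ (-1) ^ (n + 1) * (sin x - sinTaylor (n + 1) x) := by
  have sin_of_cos (n : ℕ) (h : ∀ x, 0 ≤ x → 0 ≤ (-1) ^ (n + 1) * (cos x - cosTaylor (n + 1) x))
      (x : ℝ) (hx : 0 ≤ x) : 0 ≤ (-1) ^ (n + 1) * (sin x - sinTaylor (n + 1) x) :=
    nonneg_of_hasDerivAt_nonneg (by simp [sinTaylor])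
      (fun y ↦ ((hasDerivAt_sin y).sub (hasDerivAt_sinTaylor (n + 1) y)).const_mul _) h hx
  suffices hcos : ∀ x, 0 ≤ x → 0 ≤ (-1) ^ (n + 1) * (cos x - cosTaylor (n + 1) x) from
    fun x hx ↦ ⟨hcos x hx, sin_of_cos n hcos x hx⟩
  induction n with
  | zero =>
    intro x _
    simpa [cosTaylor] using cos_le_one x
  | succ n ih =>
    intro x hx
    refine nonneg_of_hasDerivAt_nonneg
      (f := fun x ↦ (-1) ^ (n + 1 + 1) * (cos x - cosTaylor (n + 1 + 1) x))
      (by simp [cosTaylor, Finset.sum_range_succ']) (fun y ↦ ?_) (sin_of_cos n ih) hx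
    refine (((hasDerivAt_cos y).sub (hasDerivAt_cosTaylor_succ (n + 1) y)).const_mul
      ((-1) ^ (n + 1 + 1))).congr_deriv ?_
    ring

lemma sin_le_sinTaylor (n : ℕ) {x : ℝ} (hx : 0 ≤ x) : sin x ≤ sinTaylor (2 * n + 1) x := by
  simpa [pow_succ, pow_mul] using (neg_one_pow_mul_sub_taylor_nonneg (2 * n) x hx).2

end Taylor

section WeightedPowerMean

variable {a b r s : ℝ}

lemma weightedPowerMean_of_ne_zero (hr : r ≠ 0) (a b : ℝ) :
    weightedPowerMean r a b = (2 / 3 * a ^ r + 1 / 3 * b ^ r) ^ (1 / r) := by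
  rw [weightedPowerMean, if_neg hr]

lemma weightedPowerMean_zero (a b : ℝ) :
    weightedPowerMean 0 a b = a ^ ((2 : ℝ) / 3) * b ^ ((1 : ℝ) / 3) := by
  rw [weightedPowerMean, if_pos rfl]

lemma weightedPowerMean_pos (ha : 0 < a) (hb : 0 < b) (r : ℝ) : 0 < weightedPowerMean r a b := by
  unfold weightedPowerMean
  split_ifs <;> positivity

lemma weightedPowerMean_neg (ha : 0 ≤ a) (hb : 0 ≤ b) (r : ℝ) :
    weightedPowerMean (-r) a b = (weightedPowerMean r a⁻¹ b⁻¹)⁻¹ := by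
  rcases eq_or_ne r 0 with rfl | hr
  · simp only [neg_zero, weightedPowerMean_zero, inv_rpow ha, inv_rpow hb, mul_inv_rev, inv_inv,
      mul_comm]
  · rw [weightedPowerMean_of_ne_zero (neg_ne_zero.2 hr), weightedPowerMean_of_ne_zero hr,
      rpow_neg_eq_inv_rpow, rpow_neg_eq_inv_rpow, one_div_neg_eq_neg_one_div,
      rpow_neg (by positivity)]

lemma weightedPowerMean_zero_le (ha : 0 < a) (hb : 0 < b) (hr : 0 ≤ r) :
    weightedPowerMean 0 a b ≤ weightedPowerMean r a b := by
  rcases hr.eq_or_lt with rfl | hr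
  · rfl
  rw [weightedPowerMean_zero, weightedPowerMean_of_ne_zero hr.ne', one_div r,
    le_rpow_inv_iff_of_pos (by positivity) (by positivity) hr,
    mul_rpow (by positivity) (by positivity), ← rpow_mul ha.le, ← rpow_mul hb.le,
    mul_comm (2 / 3), mul_comm (1 / 3), rpow_mul ha.le, rpow_mul hb.le]
  exact geom_mean_le_arith_mean2_weighted (by norm_num) (by norm_num) (by positivity)
    (by positivity) (by norm_num)

lemma weightedPowerMean_le_of_pos (ha : 0 ≤ a) (hb : 0 ≤ b) (hr : 0 < r) (hrs : r ≤ s) :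
    weightedPowerMean r a b ≤ weightedPowerMean s a b := by
  have hs : 0 < s := hr.trans_le hrs
  have jensen : (2 / 3 * a ^ r + 1 / 3 * b ^ r) ^ (s / r) ≤ 2 / 3 * a ^ s + 1 / 3 * b ^ s := by
    have := (convexOn_rpow ((one_le_div hr).2 hrs)).2 (rpow_nonneg ha r) (rpow_nonneg hb r)
      (by norm_num : (0 : ℝ) ≤ 2 / 3) (by norm_num : (0 : ℝ) ≤ 1 / 3) (by norm_num)
    simpa only [smul_eq_mul, ← rpow_mul ha, ← rpow_mul hb, mul_div_cancel₀ s hr.ne'] using this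
  rw [weightedPowerMean_of_ne_zero hr.ne', weightedPowerMean_of_ne_zero hs.ne', one_div s,
    le_rpow_inv_iff_of_pos (by positivity) (by positivity) hs, ← rpow_mul (by positivity),
    one_div_mul_eq_div r s]
  exact jensen

lemma weightedPowerMean_mono (ha : 0 < a) (hb : 0 < b) (hrs : r ≤ s) :
    weightedPowerMean r a b ≤ weightedPowerMean s a b := by
  have neg (t : ℝ) : weightedPowerMean t a b = (weightedPowerMean (-t) a⁻¹ b⁻¹)⁻¹ := by
    simpa using weightedPowerMean_neg ha.le hb.le (-t)
  have hpos (t : ℝ) : 0 < weightedPowerMean t a⁻¹ b⁻¹ :=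
    weightedPowerMean_pos (inv_pos.2 ha) (inv_pos.2 hb) t
  rcases lt_or_ge 0 r with hr | hr
  · exact weightedPowerMean_le_of_pos ha.le hb.le hr hrs
  rcases le_or_gt 0 s with hs | hs
  · calc weightedPowerMean r a b = (weightedPowerMean (-r) a⁻¹ b⁻¹)⁻¹ := neg r
      _ ≤ (weightedPowerMean 0 a⁻¹ b⁻¹)⁻¹ := inv_anti₀ (hpos 0) <|
          weightedPowerMean_zero_le (inv_pos.2 ha) (inv_pos.2 hb) (neg_nonneg.2 hr)
      _ = weightedPowerMean 0 a b := by rw [neg 0, neg_zero]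
      _ ≤ weightedPowerMean s a b := weightedPowerMean_zero_le ha hb hs
  · rw [neg r, neg s]
    exact inv_anti₀ (hpos _) <| weightedPowerMean_le_of_pos (inv_pos.2 ha).le (inv_pos.2 hb).le
      (neg_pos.2 hs) (neg_le_neg hrs)

end WeightedPowerMean

section QuarterPeriod

variable {x : ℝ}

lemma lt_pi_of_mem_Ioo_zero (hx : x ∈ Ioo 0 (π / 2)) : x < π :=
  hx.2.trans (half_lt_self pi_pos)

lemma cos_pos_of_mem_Ioo_zero (hx : x ∈ Ioo 0 (π / 2)) : 0 < cos x :=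
  cos_pos_of_mem_Ioo ⟨(neg_neg_of_pos pi_div_two_pos).trans hx.1, hx.2⟩

end QuarterPeriod

section SineCosineDifferences

/-- The combination `A x = sin x - x cos x`, whose derivative is `x sin x`. -/
noncomputable def sinSubMulCos (x : ℝ) : ℝ := sin x - x * cos x

/-- The combination `B x = x - sin x cos x`, whose derivative is `2 sin² x`. -/
noncomputable def idSubSinMulCos (x : ℝ) : ℝ := x - sin x * cos x

variable {x : ℝ}

lemma hasDerivAt_sinSubMulCos (x : ℝ) : HasDerivAt sinSubMulCos (x * sin x) x := by
  refine ((hasDerivAt_sin x).sub ((hasDerivAt_id' x).mul (hasDerivAt_cos x))).congr_deriv ?_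
  ring

lemma hasDerivAt_idSubSinMulCos (x : ℝ) : HasDerivAt idSubSinMulCos (2 * sin x ^ 2) x := by
  refine ((hasDerivAt_id' x).sub ((hasDerivAt_sin x).mul (hasDerivAt_cos x))).congr_deriv ?_
  linear_combination -sin_sq_add_cos_sq x

lemma sinSubMulCos_two_mul (x : ℝ) :
    sinSubMulCos (2 * x) = 2 * (sin x * cos x - x * cos (2 * x)) := by
  rw [sinSubMulCos, sin_two_mul]
  ring

lemma idSubSinMulCos_eq (x : ℝ) : idSubSinMulCos x = x - sin (2 * x) / 2 := by
  rw [idSubSinMulCos, sin_two_mul]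
  ring

lemma sinSubMulCos_pos (hx : 0 < x) (hxπ : x ≤ π) : 0 < sinSubMulCos x := by
  have hc : Continuous sinSubMulCos :=
    continuous_iff_continuousAt.2 fun y ↦ (hasDerivAt_sinSubMulCos y).continuousAt
  have h0 : Tendsto sinSubMulCos (𝓝[>] 0) (𝓝 0) := by
    simpa [sinSubMulCos] using (hc.tendsto 0).mono_left (nhdsWithin_le_nhds (s := Ioi 0))
  exact lt_of_tendsto_of_hasDerivAt_pos hx h0 hc.continuousOn
    (fun y _ ↦ hasDerivAt_sinSubMulCos y)
    fun y hy ↦ mul_pos hy.1 (sin_pos_of_pos_of_lt_pi hy.1 (hy.2.trans_le hxπ))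

lemma idSubSinMulCos_pos (hx : 0 < x) : 0 < idSubSinMulCos x := by
  rw [idSubSinMulCos_eq]
  linarith [sin_lt (mul_pos two_pos hx)]

lemma tendsto_sin_div_self : Tendsto (fun x ↦ sin x / x) (𝓝[≠] 0) (𝓝 1) := by
  simpa [div_eq_inv_mul] using hasDerivAt_iff_tendsto_slope_zero.1 (hasDerivAt_sin 0)

lemma tendsto_sinSubMulCos_div_pow_three :
    Tendsto (fun x ↦ sinSubMulCos x / x ^ 3) (𝓝[≠] 0) (𝓝 (1 / 3)) := by
  have h : Tendsto (fun x ↦ x * sin x / x ^ 2) (𝓝[≠] 0) (𝓝 1) :=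
    tendsto_sin_div_self.congr fun x ↦ by field_simp
  convert tendsto_div_pow_succ_of_hasDerivAt (by simp [sinSubMulCos])
    hasDerivAt_sinSubMulCos h using 2
  norm_num

lemma tendsto_idSubSinMulCos_div_pow_three :
    Tendsto (fun x ↦ idSubSinMulCos x / x ^ 3) (𝓝[≠] 0) (𝓝 (2 / 3)) := by
  have h : Tendsto (fun x ↦ 2 * sin x ^ 2 / x ^ 2) (𝓝[≠] 0) (𝓝 (2 * 1 ^ 2)) :=
    ((tendsto_sin_div_self.pow 2).const_mul 2).congr fun x ↦ by rw [div_pow, mul_div_assoc]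
  convert tendsto_div_pow_succ_of_hasDerivAt (by simp [idSubSinMulCos])
    hasDerivAt_idSubSinMulCos h using 2
  norm_num

lemma sinSubMulCos_le (hx : 0 ≤ x) : sinSubMulCos x ≤ x ^ 3 / 3 - x ^ 5 / 30 + x ^ 7 / 840 := by
  refine sub_nonneg.1 <| nonneg_of_hasDerivAt_nonneg
    (f := fun y ↦ y ^ 3 / 3 - y ^ 5 / 30 + y ^ 7 / 840 - sinSubMulCos y)
    (f' := fun y ↦ y * (sinTaylor 3 y - sin y)) (by simp [sinSubMulCos]) (fun y ↦ ?_)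
    (fun y hy ↦ mul_nonneg hy (sub_nonneg.2 (sin_le_sinTaylor 1 hy))) hx
  refine (((((hasDerivAt_pow 3 y).div_const 3).sub ((hasDerivAt_pow 5 y).div_const 30)).add
    ((hasDerivAt_pow 7 y).div_const 840)).sub (hasDerivAt_sinSubMulCos y)).congr_deriv ?_
  rw [sinTaylor_three]
  ring

lemma le_idSubSinMulCos (hx : 0 ≤ x) :
    2 * x ^ 3 / 3 - 2 * x ^ 5 / 15 + 4 * x ^ 7 / 315 - 2 * x ^ 9 / 2835 ≤ idSubSinMulCos x := by
  have h := sin_le_sinTaylor 2 (x := 2 * x) (by positivity)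
  rw [sinTaylor_five] at h
  rw [idSubSinMulCos_eq]
  linarith

lemma taylor_polynomial_lt {t : ℝ} (ht : 0 < t) (ht' : t < 5 / 2) :
    (1 - t / 10 + t ^ 2 / 280) ^ 2 * (1 - 2 * t / 5 + 2 * t ^ 2 / 35) <
      (1 - t / 5 + 2 * t ^ 2 / 105 - t ^ 3 / 945) ^ 3 := by
  obtain ⟨s, rfl⟩ : ∃ s, t = 5 / 2 - s := ⟨5 / 2 - t, by ring⟩
  have hs : 0 < s := by linarith
  -- The difference is `t ^ 2` times a polynomial whose expansion at the right endpoint `5 / 2` has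
  -- positive coefficients.
  refine sub_pos.1 ?_
  calc 0 < (5 / 2 - s) ^ 2 * (78769589 / 86416243200 + 462754751 / 108020304000 * s
        + 4440337 / 3600676800 * s ^ 2 + 4807063 / 27005076000 * s ^ 3
        + 87949 / 5401015200 * s ^ 4 + 1147 / 1125211500 * s ^ 5 + 73 / 1687817250 * s ^ 6
        + 1 / 843908625 * s ^ 7) := by positivity
    _ = _ := by ring

lemma sinSubMulCos_sq_mul_sinSubMulCos_two_mul_lt (hx : x ∈ Ioo 0 (π / 2)) :
    sinSubMulCos x ^ 2 * sinSubMulCos (2 * x) < idSubSinMulCos x ^ 3 := by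
  obtain ⟨hx0, hxπ⟩ := hx
  have ht : x ^ 2 < 5 / 2 := by nlinarith [pi_lt_d2]
  have hA : sinSubMulCos x ≤ x ^ 3 / 3 * (1 - x ^ 2 / 10 + (x ^ 2) ^ 2 / 280) :=
    (sinSubMulCos_le hx0.le).trans_eq (by ring)
  have hA₂ : sinSubMulCos (2 * x) ≤
      8 * x ^ 3 / 3 * (1 - 2 * x ^ 2 / 5 + 2 * (x ^ 2) ^ 2 / 35) :=
    (sinSubMulCos_le (by positivity)).trans_eq (by ring)
  have hB : 2 * x ^ 3 / 3 * (1 - x ^ 2 / 5 + 2 * (x ^ 2) ^ 2 / 105 - (x ^ 2) ^ 3 / 945) ≤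
      idSubSinMulCos x :=
    (le_idSubSinMulCos hx0.le).trans_eq' (by ring)
  have hpoly := taylor_polynomial_lt (pow_pos hx0 2) ht
  have hA_pos := sinSubMulCos_pos hx0 (by linarith)
  have hA₂_pos := sinSubMulCos_pos (mul_pos two_pos hx0) (by linarith)
  have hB_factor : 0 < 1 - x ^ 2 / 5 + 2 * (x ^ 2) ^ 2 / 105 - (x ^ 2) ^ 3 / 945 := by
    nlinarith [pow_pos hx0 2, pow_pos hx0 4]
  calc sinSubMulCos x ^ 2 * sinSubMulCos (2 * x)
      ≤ (x ^ 3 / 3 * (1 - x ^ 2 / 10 + (x ^ 2) ^ 2 / 280)) ^ 2 *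
          (8 * x ^ 3 / 3 * (1 - 2 * x ^ 2 / 5 + 2 * (x ^ 2) ^ 2 / 35)) := by gcongr
    _ = 8 * x ^ 9 / 27 * ((1 - x ^ 2 / 10 + (x ^ 2) ^ 2 / 280) ^ 2 *
          (1 - 2 * x ^ 2 / 5 + 2 * (x ^ 2) ^ 2 / 35)) := by ring
    _ < 8 * x ^ 9 / 27 *
          (1 - x ^ 2 / 5 + 2 * (x ^ 2) ^ 2 / 105 - (x ^ 2) ^ 3 / 945) ^ 3 := by gcongr
    _ = (2 * x ^ 3 / 3 *
          (1 - x ^ 2 / 5 + 2 * (x ^ 2) ^ 2 / 105 - (x ^ 2) ^ 3 / 945)) ^ 3 := by ring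
    _ ≤ idSubSinMulCos x ^ 3 := by gcongr

end SineCosineDifferences

section LogDerivRatio

variable {x : ℝ}

/-- The ratio of the logarithmic derivatives of `B / (2 A)` and of `cos`, for `A = sinSubMulCos` and
`B = idSubSinMulCos`. -/
noncomputable def logDerivRatio (x : ℝ) : ℝ :=
  x * cos x / sinSubMulCos x - 2 * (sin x * cos x) / idSubSinMulCos x

lemma hasDerivAt_logDerivRatio (hA : sinSubMulCos x ≠ 0) (hB : idSubSinMulCos x ≠ 0) :
    HasDerivAt logDerivRatio
      ((sinSubMulCos x ^ 2 * sinSubMulCos (2 * x) - idSubSinMulCos x ^ 3) /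
        (sinSubMulCos x ^ 2 * idSubSinMulCos x ^ 2)) x := by
  have h₁ : (1 * cos x + x * -sin x) * sinSubMulCos x - x * cos x * (x * sin x) =
      -idSubSinMulCos x := by
    simp only [sinSubMulCos, idSubSinMulCos]
    linear_combination -x * sin_sq_add_cos_sq x
  have h₂ : 2 * (cos x * cos x + sin x * -sin x) * idSubSinMulCos x -
      2 * (sin x * cos x) * (2 * sin x ^ 2) = -sinSubMulCos (2 * x) := by
    rw [sinSubMulCos_two_mul, cos_two_mul]
    simp only [idSubSinMulCos]
    linear_combination (-2 * x - 2 * sin x * cos x) * sin_sq_add_cos_sq x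
  refine ((((hasDerivAt_id' x).mul (hasDerivAt_cos x)).div (hasDerivAt_sinSubMulCos x) hA).sub
    ((((hasDerivAt_sin x).mul (hasDerivAt_cos x)).const_mul 2).div
      (hasDerivAt_idSubSinMulCos x) hB)).congr_deriv ?_
  simp only [Pi.mul_apply]
  rw [h₁, h₂]
  field_simp
  ring

lemma strictAntiOn_logDerivRatio : StrictAntiOn logDerivRatio (Ioo 0 (π / 2)) := by
  have hA : ∀ x ∈ Ioo 0 (π / 2), 0 < sinSubMulCos x := fun x hx ↦
    sinSubMulCos_pos hx.1 (lt_pi_of_mem_Ioo_zero hx).le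
  have hderiv : ∀ x ∈ Ioo 0 (π / 2), HasDerivAt logDerivRatio _ x := fun x hx ↦
    hasDerivAt_logDerivRatio (hA x hx).ne' (idSubSinMulCos_pos hx.1).ne'
  refine strictAntiOn_of_hasDerivWithinAt_neg (convex_Ioo _ _)
    (fun x hx ↦ (hderiv x hx).continuousAt.continuousWithinAt)
    (fun x hx ↦ (hderiv x (interior_subset hx)).hasDerivWithinAt) fun x hx ↦ ?_
  rw [interior_Ioo] at hx
  have := hA x hx
  have := idSubSinMulCos_pos hx.1
  exact div_neg_of_neg_of_pos (sub_neg.2 (sinSubMulCos_sq_mul_sinSubMulCos_two_mul_lt hx))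
    (by positivity)

lemma tendsto_mul_sub_mul_div_pow_six :
    Tendsto (fun x ↦ (x * idSubSinMulCos x - 2 * sin x * sinSubMulCos x) / x ^ 6) (𝓝[≠] 0)
      (𝓝 (2 / 45)) := by
  have hderiv (x : ℝ) : HasDerivAt (fun x ↦ x * idSubSinMulCos x - 2 * sin x * sinSubMulCos x)
      (idSubSinMulCos x - 2 * cos x * sinSubMulCos x) x := by
    refine (((hasDerivAt_id' x).mul (hasDerivAt_idSubSinMulCos x)).sub
      (((hasDerivAt_sin x).const_mul 2).mul (hasDerivAt_sinSubMulCos x))).congr_deriv ?_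
    ring
  have hderiv₂ (x : ℝ) : HasDerivAt (fun x ↦ idSubSinMulCos x - 2 * cos x * sinSubMulCos x)
      (4 * (sin x * sinSubMulCos x)) x := by
    refine ((hasDerivAt_idSubSinMulCos x).sub
      (((hasDerivAt_cos x).const_mul 2).mul (hasDerivAt_sinSubMulCos x))).congr_deriv ?_
    rw [sinSubMulCos]
    ring
  have h₂ : Tendsto (fun x ↦ 4 * (sin x * sinSubMulCos x) / x ^ 4) (𝓝[≠] 0)
      (𝓝 (4 * (1 * (1 / 3)))) :=
    ((tendsto_sin_div_self.mul tendsto_sinSubMulCos_div_pow_three).const_mul 4).congr fun x ↦ by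
      ring
  have h₁ := tendsto_div_pow_succ_of_hasDerivAt (by simp [idSubSinMulCos, sinSubMulCos])
    hderiv₂ h₂
  convert tendsto_div_pow_succ_of_hasDerivAt (by simp) hderiv h₁ using 2
  norm_num

lemma tendsto_logDerivRatio : Tendsto logDerivRatio (𝓝[>] 0) (𝓝 (1 / 5)) := by
  have hcos : Tendsto cos (𝓝[≠] 0) (𝓝 1) := by
    simpa using (continuous_cos.tendsto 0).mono_left nhdsWithin_le_nhds
  have hlim := (hcos.mul tendsto_mul_sub_mul_div_pow_six).div
    (tendsto_sinSubMulCos_div_pow_three.mul tendsto_idSubSinMulCos_div_pow_three) (by norm_num)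
  have hval : 1 * (2 / 45) / (1 / 3 * (2 / 3)) = (1 / 5 : ℝ) := by norm_num
  rw [hval] at hlim
  refine (hlim.mono_left (nhdsGT_le_nhdsNE 0)).congr' ?_
  filter_upwards [Ioo_mem_nhdsGT pi_pos] with x hx
  have hx0 := hx.1.ne'
  have hA := (sinSubMulCos_pos hx.1 hx.2.le).ne'
  have hB := (idSubSinMulCos_pos hx.1).ne'
  simp only [Pi.div_apply, logDerivRatio]
  field_simp

lemma logDerivRatio_lt (hx : x ∈ Ioo 0 (π / 2)) : logDerivRatio x < 1 / 5 := by
  have hmono : StrictMonoOn (-logDerivRatio) (Ioc 0 x) :=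
    (strictAntiOn_logDerivRatio.mono fun y hy ↦ ⟨hy.1, hy.2.trans_lt hx.2⟩).neg
  exact neg_lt_neg_iff.1 <| lt_of_strictMonoOn_of_tendsto (f := -logDerivRatio) hx.1 hmono
    tendsto_logDerivRatio.neg

end LogDerivRatio

section LogSlopeGap

variable {r x : ℝ}

/-- The logarithm of `B / (2 A) / cos ^ (1 - r)`, for `A = sinSubMulCos` and `B = idSubSinMulCos`.
It has the same sign as the derivative of `sincGap r`. -/
noncomputable def logSlopeGap (r x : ℝ) : ℝ :=
  log (idSubSinMulCos x / (2 * sinSubMulCos x)) - (1 - r) * log (cos x)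

lemma exp_logSlopeGap (r : ℝ) (hx : x ∈ Ioo 0 (π / 2)) :
    exp (logSlopeGap r x) = idSubSinMulCos x / (2 * sinSubMulCos x) * cos x ^ (r - 1) := by
  have hA : 0 < sinSubMulCos x := sinSubMulCos_pos hx.1 (lt_pi_of_mem_Ioo_zero hx).le
  have hB : 0 < idSubSinMulCos x := idSubSinMulCos_pos hx.1
  rw [logSlopeGap, sub_eq_add_neg, exp_add, exp_log (by positivity),
    rpow_def_of_pos (cos_pos_of_mem_Ioo_zero hx)]
  congr 2
  ring

lemma hasDerivAt_logSlopeGap (r : ℝ) (hx : x ∈ Ioo 0 (π / 2)) :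
    HasDerivAt (logSlopeGap r) (tan x * ((1 - r) - logDerivRatio x)) x := by
  have hA : sinSubMulCos x ≠ 0 := (sinSubMulCos_pos hx.1 (lt_pi_of_mem_Ioo_zero hx).le).ne'
  have hB : idSubSinMulCos x ≠ 0 := (idSubSinMulCos_pos hx.1).ne'
  have hcos : cos x ≠ 0 := (cos_pos_of_mem_Ioo_zero hx).ne'
  refine ((((hasDerivAt_idSubSinMulCos x).div ((hasDerivAt_sinSubMulCos x).const_mul 2)
    (mul_ne_zero two_ne_zero hA)).log (div_ne_zero hB (mul_ne_zero two_ne_zero hA))).sub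
    (((hasDerivAt_cos x).log hcos).const_mul (1 - r))).congr_deriv ?_
  rw [logDerivRatio, tan_eq_sin_div_cos]
  simp only [Pi.div_apply]
  field_simp
  ring

lemma tendsto_logSlopeGap (r : ℝ) : Tendsto (logSlopeGap r) (𝓝[>] 0) (𝓝 0) := by
  have hratio : Tendsto (fun x ↦ idSubSinMulCos x / (2 * sinSubMulCos x)) (𝓝[>] 0) (𝓝 1) := by
    have h := tendsto_idSubSinMulCos_div_pow_three.div
      (tendsto_sinSubMulCos_div_pow_three.const_mul 2) (by norm_num)
    rw [show (2 / 3 / (2 * (1 / 3)) : ℝ) = 1 by norm_num] at h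
    refine (h.mono_left (nhdsGT_le_nhdsNE 0)).congr' ?_
    filter_upwards [self_mem_nhdsWithin] with x hx
    rw [Pi.div_apply, mul_div_assoc', div_div_div_cancel_right₀ (pow_pos hx 3).ne']
  have hcos : Tendsto cos (𝓝[>] 0) (𝓝 1) := by
    simpa using (continuous_cos.tendsto 0).mono_left nhdsWithin_le_nhds
  have h : Tendsto (logSlopeGap r) (𝓝[>] 0) (𝓝 (log 1 - (1 - r) * log 1)) :=
    (hratio.log one_ne_zero).sub ((hcos.log one_ne_zero).const_mul (1 - r))
  simpa using h

lemma continuousOn_logSlopeGap (r : ℝ) : ContinuousOn (logSlopeGap r) (Ioo 0 (π / 2)) :=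
  fun _ hx ↦ (hasDerivAt_logSlopeGap r hx).continuousAt.continuousWithinAt

lemma logSlopeGap_pos (hx : x ∈ Ioo 0 (π / 2)) (h : ∀ y ∈ Ioo 0 x, logDerivRatio y < 1 - r) :
    0 < logSlopeGap r x := by
  have hsub : ∀ y ∈ Ioc 0 x, y ∈ Ioo 0 (π / 2) := fun y hy ↦ ⟨hy.1, hy.2.trans_lt hx.2⟩
  exact lt_of_tendsto_of_hasDerivAt_pos hx.1 (tendsto_logSlopeGap r)
    ((continuousOn_logSlopeGap r).mono hsub)
    (fun y hy ↦ hasDerivAt_logSlopeGap r (hsub y (Ioo_subset_Ioc_self hy))) fun y hy ↦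
    mul_pos (tan_pos_of_pos_of_lt_pi_div_two hy.1 (hy.2.trans hx.2)) (sub_pos.2 (h y hy))

lemma logSlopeGap_neg (hx : x ∈ Ioo 0 (π / 2)) (h : ∀ y ∈ Ioo 0 x, 1 - r < logDerivRatio y) :
    logSlopeGap r x < 0 := by
  have hsub : ∀ y ∈ Ioc 0 x, y ∈ Ioo 0 (π / 2) := fun y hy ↦ ⟨hy.1, hy.2.trans_lt hx.2⟩
  exact lt_of_tendsto_of_hasDerivAt_neg hx.1 (tendsto_logSlopeGap r)
    ((continuousOn_logSlopeGap r).mono hsub)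
    (fun y hy ↦ hasDerivAt_logSlopeGap r (hsub y (Ioo_subset_Ioc_self hy))) fun y hy ↦
    mul_neg_of_pos_of_neg (tan_pos_of_pos_of_lt_pi_div_two hy.1 (hy.2.trans hx.2))
      (sub_neg.2 (h y hy))

lemma singleCrossingOn_logSlopeGap (r : ℝ) :
    SingleCrossingOn (logSlopeGap r) (Ioo 0 (π / 2)) := by
  have hderiv : SingleCrossingOn (fun x ↦ tan x * ((1 - r) - logDerivRatio x)) (Ioo 0 (π / 2)) :=
    (singleCrossingOn_of_strictMonoOn fun _ hx _ hy hxy ↦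
      sub_lt_sub_left (strictAntiOn_logDerivRatio hx hy hxy) (1 - r)).pos_mul
      fun _ hx ↦ tan_pos_of_pos_of_lt_pi_div_two hx.1 hx.2
  intro x hx y hy hxy
  have hsub : Ioc 0 y ⊆ Ioo 0 (π / 2) := fun z hz ↦ ⟨hz.1, hz.2.trans_lt hy.2⟩
  exact SingleCrossingOn.of_hasDerivAt (tendsto_logSlopeGap r)
    ((continuousOn_logSlopeGap r).mono hsub)
    (fun z hz ↦ hasDerivAt_logSlopeGap r (hsub (Ioo_subset_Ioc_self hz)))
    (hderiv.mono (Ioo_subset_Ioc_self.trans hsub)) ⟨hx.1, hxy.le⟩ ⟨hy.1, le_rfl⟩ hxy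

end LogSlopeGap

section SincGap

variable {r x : ℝ}

/-- The logarithm of the quotient of `sin x / x` by the power mean of order `r` of `1` and `cos x`.
It is written with `sinc` so as to be continuous at `0`. -/
noncomputable def sincGap (r x : ℝ) : ℝ := log (sinc x) - log (weightedPowerMean r 1 (cos x))

lemma sinc_pos_of_mem_Ico (hx : x ∈ Ico 0 π) : 0 < sinc x := by
  rcases hx.1.eq_or_lt with rfl | hx0
  · simp
  · rw [sinc_of_ne_zero hx0.ne']
    exact div_pos (sin_pos_of_pos_of_lt_pi hx0 hx.2) hx0

lemma sincGap_eq (r : ℝ) (hx : x ∈ Ioo 0 (π / 2)) :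
    sincGap r x = log (sin x / x / weightedPowerMean r 1 (cos x)) := by
  have hsinc : sinc x ≠ 0 := (sinc_pos_of_mem_Ico ⟨hx.1.le, lt_pi_of_mem_Ioo_zero hx⟩).ne'
  rw [← sinc_of_ne_zero hx.1.ne', log_div hsinc
    (weightedPowerMean_pos one_pos (cos_pos_of_mem_Ioo_zero hx) r).ne', sincGap]

lemma sincGap_pos_iff (r : ℝ) (hx : x ∈ Ioo 0 (π / 2)) :
    0 < sincGap r x ↔ weightedPowerMean r 1 (cos x) < sin x / x := by
  have hM := weightedPowerMean_pos one_pos (cos_pos_of_mem_Ioo_zero hx) r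
  have hsin := sin_pos_of_pos_of_lt_pi hx.1 (lt_pi_of_mem_Ioo_zero hx)
  have hx0 := hx.1
  rw [sincGap_eq r hx, log_pos_iff (by positivity), one_lt_div hM]

lemma sincGap_neg_iff (r : ℝ) (hx : x ∈ Ioo 0 (π / 2)) :
    sincGap r x < 0 ↔ sin x / x < weightedPowerMean r 1 (cos x) := by
  have hM := weightedPowerMean_pos one_pos (cos_pos_of_mem_Ioo_zero hx) r
  have hsin := sin_pos_of_pos_of_lt_pi hx.1 (lt_pi_of_mem_Ioo_zero hx)
  have hx0 := hx.1
  rw [sincGap_eq r hx, log_neg_iff (by positivity), div_lt_one hM]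

lemma sincGap_eq_of_ne_zero (hr : r ≠ 0) (hx : 0 ≤ cos x) :
    sincGap r x = log (sinc x) - 1 / r * log (2 / 3 + 1 / 3 * cos x ^ r) := by
  rw [sincGap, weightedPowerMean_of_ne_zero hr, one_rpow, mul_one, log_rpow (by positivity)]

lemma sincGap_zero (hr : r ≠ 0) : sincGap r 0 = 0 := by
  rw [sincGap_eq_of_ne_zero hr (by simp)]
  norm_num

lemma sincGap_pi_div_two (hr : 0 < r) : sincGap r (π / 2) = log (3 / 2) / r - log (π / 2) := by
  rw [sincGap_eq_of_ne_zero hr.ne' (by simp), sinc_of_ne_zero (by positivity), sin_pi_div_two,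
    cos_pi_div_two, zero_rpow hr.ne', one_div (π / 2), log_inv, mul_zero, add_zero,
    ← inv_div 3 2, log_inv]
  ring

lemma sincGap_pi_div_two_nonpos_iff (hr : 0 < r) :
    sincGap r (π / 2) ≤ 0 ↔ (log 3 - log 2) / (log π - log 2) ≤ r := by
  have hlog : 0 < log π - log 2 := sub_pos.2 (log_lt_log two_pos (by linarith [pi_gt_three]))
  rw [sincGap_pi_div_two hr, sub_nonpos, log_div (by norm_num) two_ne_zero,
    log_div pi_ne_zero two_ne_zero, div_le_iff₀ hr, div_le_iff₀' hlog]

lemma continuousOn_sincGap (hr : 0 < r) : ContinuousOn (sincGap r) (Icc 0 (π / 2)) := by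
  have hcos : ∀ x ∈ Icc 0 (π / 2), 0 ≤ cos x := fun x hx ↦
    cos_nonneg_of_mem_Icc ⟨by linarith [hx.1, pi_pos], hx.2⟩
  have hlog : ContinuousOn (fun x ↦ log (sinc x)) (Icc 0 (π / 2)) :=
    continuous_sinc.continuousOn.log fun x hx ↦
      (sinc_pos_of_mem_Ico ⟨hx.1, by linarith [hx.2, pi_pos]⟩).ne'
  have hmean : ContinuousOn (fun x ↦ 2 / 3 + 1 / 3 * cos x ^ r) (Icc 0 (π / 2)) :=
    ((continuous_cos.rpow_const fun _ ↦ .inr hr.le).const_mul _).const_add _ |>.continuousOn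
  refine (hlog.sub ((hmean.log fun x hx ↦ ?_).const_mul (1 / r))).congr fun x hx ↦
    sincGap_eq_of_ne_zero hr.ne' (hcos x hx)
  have := hcos x hx
  positivity

lemma tendsto_sincGap (hr : 0 < r) : Tendsto (sincGap r) (𝓝[>] 0) (𝓝 0) := by
  have hpi : (0 : ℝ) < π / 2 := by positivity
  have h := (continuousOn_sincGap hr 0 ⟨le_rfl, hpi.le⟩).tendsto
  rw [sincGap_zero hr.ne'] at h
  exact h.mono_left <| nhdsWithin_le_of_mem <|
    mem_of_superset (Ioo_mem_nhdsGT hpi) Ioo_subset_Icc_self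

lemma hasDerivAt_log_sinc (hx : x ≠ 0) (hsin : sin x ≠ 0) :
    HasDerivAt (fun y ↦ log (sinc y)) (-sinSubMulCos x / (x * sin x)) x := by
  have hsinc : HasDerivAt sinc ((cos x * x - sin x * 1) / x ^ 2) x :=
    ((hasDerivAt_sin x).div (hasDerivAt_id' x) hx).congr_of_eventuallyEq <| by
      filter_upwards [isOpen_ne.mem_nhds hx] with y hy using sinc_of_ne_zero hy
  have hne : sinc x ≠ 0 := by
    rw [sinc_of_ne_zero hx]
    exact div_ne_zero hsin hx
  refine (hsinc.log hne).congr_deriv ?_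
  rw [sinc_of_ne_zero hx, sinSubMulCos]
  field_simp
  ring

lemma hasDerivAt_sincGap (hr : r ≠ 0) (hx : x ∈ Ioo 0 (π / 2)) :
    HasDerivAt (sincGap r) (2 * sinSubMulCos x / (x * sin x * (2 + cos x ^ r)) *
      (exp (logSlopeGap r x) - 1)) x := by
  have hcos : 0 < cos x := cos_pos_of_mem_Ioo_zero hx
  have hsin : 0 < sin x := sin_pos_of_pos_of_lt_pi hx.1 (lt_pi_of_mem_Ioo_zero hx)
  have hA : 0 < sinSubMulCos x := sinSubMulCos_pos hx.1 (lt_pi_of_mem_Ioo_zero hx).le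
  have hx0 : 0 < x := hx.1
  have hmean : HasDerivAt (fun y ↦ 1 / r * log (2 / 3 + 1 / 3 * cos y ^ r))
      (-(sin x * cos x ^ (r - 1)) / (2 + cos x ^ r)) x := by
    refine ((((((hasDerivAt_cos x).rpow_const (p := r) (.inl hcos.ne')).const_mul
      (1 / 3)).const_add (2 / 3)).log (by positivity)).const_mul (1 / r)).congr_deriv ?_
    field_simp
  refine (((hasDerivAt_log_sinc hx0.ne' hsin.ne').sub hmean).congr_of_eventuallyEq ?_).congr_deriv
    ?_
  · filter_upwards [isOpen_Ioo.mem_nhds hx] with y hy using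
      sincGap_eq_of_ne_zero hr (cos_pos_of_mem_Ioo_zero hy).le
  · have hpow : cos x ^ r = cos x ^ (r - 1) * cos x := by
      rw [← rpow_add_one hcos.ne', sub_add_cancel]
    have hB : x * sin x ^ 2 - sinSubMulCos x * cos x = idSubSinMulCos x := by
      simp only [sinSubMulCos, idSubSinMulCos]
      linear_combination x * sin_sq_add_cos_sq x
    have hden : 2 + cos x ^ r ≠ 0 := by positivity
    rw [exp_logSlopeGap r hx, ← hB]
    field_simp
    rw [hpow]
    ring

lemma sincGap_deriv_factor_pos (r : ℝ) (hx : x ∈ Ioo 0 (π / 2)) :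
    0 < 2 * sinSubMulCos x / (x * sin x * (2 + cos x ^ r)) := by
  have hcos : 0 < cos x := cos_pos_of_mem_Ioo_zero hx
  have hsin : 0 < sin x := sin_pos_of_pos_of_lt_pi hx.1 (lt_pi_of_mem_Ioo_zero hx)
  have hA : 0 < sinSubMulCos x := sinSubMulCos_pos hx.1 (lt_pi_of_mem_Ioo_zero hx).le
  have hx0 : 0 < x := hx.1
  positivity

lemma sincGap_pos (hr : 0 < r) (hx : x ∈ Ioo 0 (π / 2))
    (h : ∀ y ∈ Ioo 0 x, logDerivRatio y < 1 - r) : 0 < sincGap r x := by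
  have hsub : ∀ y ∈ Ioo 0 x, y ∈ Ioo 0 (π / 2) := fun y hy ↦ ⟨hy.1, hy.2.trans hx.2⟩
  refine lt_of_tendsto_of_hasDerivAt_pos hx.1 (tendsto_sincGap hr)
    ((continuousOn_sincGap hr).mono fun y hy ↦ ⟨hy.1.le, hy.2.trans hx.2.le⟩)
    (fun y hy ↦ hasDerivAt_sincGap hr.ne' (hsub y hy)) fun y hy ↦
    mul_pos (sincGap_deriv_factor_pos r (hsub y hy)) (sub_pos.2 (one_lt_exp_iff.2 ?_))
  exact logSlopeGap_pos (hsub y hy) fun z hz ↦ h z ⟨hz.1, hz.2.trans hy.2⟩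

lemma sincGap_neg (hr : 0 < r) (hx : x ∈ Ioo 0 (π / 2))
    (h : ∀ y ∈ Ioo 0 x, 1 - r < logDerivRatio y) : sincGap r x < 0 := by
  have hsub : ∀ y ∈ Ioo 0 x, y ∈ Ioo 0 (π / 2) := fun y hy ↦ ⟨hy.1, hy.2.trans hx.2⟩
  refine lt_of_tendsto_of_hasDerivAt_neg hx.1 (tendsto_sincGap hr)
    ((continuousOn_sincGap hr).mono fun y hy ↦ ⟨hy.1.le, hy.2.trans hx.2.le⟩)
    (fun y hy ↦ hasDerivAt_sincGap hr.ne' (hsub y hy)) fun y hy ↦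
    mul_neg_of_pos_of_neg (sincGap_deriv_factor_pos r (hsub y hy))
      (sub_neg.2 (exp_lt_one_iff.2 ?_))
  exact logSlopeGap_neg (hsub y hy) fun z hz ↦ h z ⟨hz.1, hz.2.trans hy.2⟩

lemma singleCrossingOn_sincGap (hr : 0 < r) :
    SingleCrossingOn (sincGap r) (Ioc 0 (π / 2)) :=
  .of_hasDerivAt (tendsto_sincGap hr) ((continuousOn_sincGap hr).mono Ioc_subset_Icc_self)
    (fun _ ↦ hasDerivAt_sincGap hr.ne')
    ((singleCrossingOn_logSlopeGap r).exp_sub_one.pos_mul fun _ ↦ sincGap_deriv_factor_pos r)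

lemma forall_sincGap_neg_iff (hr : 0 < r) :
    (∀ x ∈ Ioo 0 (π / 2), sincGap r x < 0) ↔ (log 3 - log 2) / (log π - log 2) ≤ r := by
  have hpi : (0 : ℝ) < π / 2 := by positivity
  rw [← sincGap_pi_div_two_nonpos_iff hr]
  refine ⟨fun h ↦ ?_, fun h x hx ↦ ?_⟩
  · have hlim : Tendsto (sincGap r) (𝓝[<] (π / 2)) (𝓝 (sincGap r (π / 2))) :=
      (continuousOn_sincGap hr _ ⟨hpi.le, le_rfl⟩).mono_left <| nhdsWithin_le_of_mem <|
        mem_of_superset (Ioo_mem_nhdsLT hpi) Ioo_subset_Icc_self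
    refine le_of_tendsto hlim ?_
    filter_upwards [Ioo_mem_nhdsLT hpi] with x hx using (h x hx).le
  · by_contra! hx'
    exact h.not_gt <|
      singleCrossingOn_sincGap hr (Ioo_subset_Ioc_self hx) ⟨hpi, le_rfl⟩ hx.2 hx'

end SincGap

theorem forall_weightedPowerMean_lt_sin_div_iff (r : ℝ) :
    (∀ x ∈ Ioo 0 (π / 2), weightedPowerMean r 1 (cos x) < sin x / x) ↔ r ≤ 4 / 5 := by
  refine ⟨fun h ↦ ?_, fun hr x hx ↦ ?_⟩
  · by_contra! hr
    have hev : ∀ᶠ x in 𝓝[>] 0, 1 - r < logDerivRatio x :=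
      tendsto_logDerivRatio.eventually_const_lt (by linarith)
    obtain ⟨b, hb, hsub⟩ := mem_nhdsGT_iff_exists_Ioo_subset.1 hev
    obtain ⟨x, hx0, hx⟩ := exists_between (lt_min (mem_Ioi.1 hb) (half_pos pi_pos))
    have hxI : x ∈ Ioo 0 (π / 2) := ⟨hx0, hx.trans_le (min_le_right _ _)⟩
    have hneg : sincGap r x < 0 := sincGap_neg (by linarith) hxI fun y hy ↦
      hsub ⟨hy.1, hy.2.trans (hx.trans_le (min_le_left _ _))⟩
    exact hneg.not_gt ((sincGap_pos_iff r hxI).2 (h x hxI))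
  · refine (weightedPowerMean_mono one_pos (cos_pos_of_mem_Ioo_zero hx) hr).trans_lt <|
      (sincGap_pos_iff _ hx).1 <| sincGap_pos (by norm_num) hx fun y hy ↦ ?_
    exact (logDerivRatio_lt ⟨hy.1, hy.2.trans hx.2⟩).trans_eq (by norm_num)

theorem forall_sin_div_lt_weightedPowerMean_iff (r : ℝ) :
    (∀ x ∈ Ioo 0 (π / 2), sin x / x < weightedPowerMean r 1 (cos x)) ↔
      (log 3 - log 2) / (log π - log 2) ≤ r := by
  have hpos : 0 < (log 3 - log 2) / (log π - log 2) :=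
    div_pos (sub_pos.2 (log_lt_log two_pos (by norm_num)))
      (sub_pos.2 (log_lt_log two_pos (by linarith [pi_gt_three])))
  refine ⟨fun h ↦ ?_, fun hr x hx ↦ ?_⟩
  · by_contra! hr
    obtain ⟨s, hs, hs'⟩ := exists_between (max_lt hr hpos)
    have hrs := (le_max_left _ _).trans_lt hs
    refine hs'.not_ge <| (forall_sincGap_neg_iff ((le_max_right _ _).trans_lt hs)).1 fun x hx ↦ ?_
    exact (sincGap_neg_iff s hx).2 <|
      (h x hx).trans_le (weightedPowerMean_mono one_pos (cos_pos_of_mem_Ioo_zero hx) hrs.le)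
  · exact (sincGap_neg_iff r hx).1 ((forall_sincGap_neg_iff (hpos.trans_le hr)).2 hr x hx)

theorem powerMean_sin_bounds (α β : ℝ) :
    (∀ x ∈ Ioo (0 : ℝ) (π / 2),
        weightedPowerMean α 1 (cos x) < sin x / x ∧
          sin x / x < weightedPowerMean β 1 (cos x)) ↔
      (α ≤ 4 / 5 ∧ β ≥ (Real.log 3 - Real.log 2) / (Real.log π - Real.log 2)) := by
  rw [← forall_weightedPowerMean_lt_sin_div_iff, ge_iff_le,
    ← forall_sin_div_lt_weightedPowerMean_iff]
  simp only [forall_and]
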